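/- arXiv:2412.17663 — 8 statements merged into one kernel-verified Lean document; each statement's English description precedes it below -/
import Mathlib

section
/- Let W, X : ℕ×ℕ → ℝ be infinite matrices such that W is symmetric (W_{i,j} = W_{j,i}), X is tridiagonal (X_{i,j} = 0 whenever |i−j| > 1), and XᵀW = WX holds entrywise, i.e. for all m, n ∈ ℕ: X_{m-1,m} W_{m-1,n} + X_{m,m} W_{m,n} + X_{m+1,m} W_{m+1,n} = W_{m,n+1} X_{n+1,n} + W_{m,n} X_{n,n} + W_{m,n-1} X_{n-1,n} (terms with index −1 being zero). Fix n ≥ 1 and let A, B ∈ ℝ^{n×n} be the principal n×n sections of X and W respectively (entries with indices 0 ≤ i,j < n), let v ∈ ℝⁿ be given by v_i = W_{i,n} for 0 ≤ i < n, let e be the last standard basis vector of ℝⁿ, let G = ( e | −X_{n,n-1}·v ) ∈ ℝ^{n×2}, and let J = [[0,1],[−1,0]] ∈ ℝ^{2×2}. Then AᵀB − BA = G J Gᵀ. -/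
open Matrix

lemma tri_sum (X : ℕ → ℕ → ℝ)
    (htri : ∀ i j : ℕ, (i + 1 < j ∨ j + 1 < i) → X i j = 0) (f : ℕ → ℝ) (n i : ℕ) (hi : i < n) :
    ∑ k ∈ Finset.range n, X k i * f k =
      (if i = 0 then 0 else X (i - 1) i * f (i - 1)) + X i i * f i + X (i + 1) i * f (i + 1)
        - (if i = n - 1 then X n (n - 1) * f n else 0) := by
  have h0 : ∑ k ∈ Finset.range i, X k i * f k =
      (if i = 0 then 0 else X (i - 1) i * f (i - 1)) := by
    rcases i with _ | k
    · simp
    · rw [Finset.sum_range_succ, Finset.sum_eq_zero]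
      · simp
      · intro x hx
        rw [htri x (k + 1) (Or.inl (by have := Finset.mem_range.1 hx; omega)), zero_mul]
  have h1 : ∀ d : ℕ, ∑ k ∈ Finset.range (i + 2 + d), X k i * f k =
      (if i = 0 then 0 else X (i - 1) i * f (i - 1)) + X i i * f i + X (i + 1) i * f (i + 1) := by
    intro d
    induction d with
    | zero => rw [add_zero, Finset.sum_range_succ, Finset.sum_range_succ, h0]
    | succ d ih =>
      rw [← add_assoc, Finset.sum_range_succ, ih, htri (i + 2 + d) i (Or.inr (by omega))]
      ring
  by_cases h : i = n - 1
  · obtain rfl : n = i + 1 := by omega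
    rw [Finset.sum_range_succ, h0, if_pos h]
    simp
  · obtain ⟨d, rfl⟩ := Nat.exists_eq_add_of_le (show i + 2 ≤ n by omega)
    rw [h1, if_neg h, sub_zero]

/-- If `W` is symmetric, `X` is tridiagonal, and `Xᵀ W = W X`
entrywise, then the principal `n × n` sections `A` of `X` and `B` of `W`
satisfy the displacement equation `Aᵀ B - B A = G J Gᵀ` with generators
`G = (e | -X_{n,n-1} v)`, where `v_i = W_{i,n}`, `e` is the last standard
basis vector, and `J = [[0,1],[-1,0]]`. -/
theorem finite_section_displacement
    (W X : ℕ → ℕ → ℝ)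
    (hsymm : ∀ i j : ℕ, W i j = W j i)
    (htri : ∀ i j : ℕ, (i + 1 < j ∨ j + 1 < i) → X i j = 0)
    (hdisp : ∀ m n : ℕ,
      (if m = 0 then 0 else X (m - 1) m * W (m - 1) n)
        + X m m * W m n + X (m + 1) m * W (m + 1) n
      = W m (n + 1) * X (n + 1) n + W m n * X n n
        + (if n = 0 then 0 else W m (n - 1) * X (n - 1) n))
    (n : ℕ) (hn : 1 ≤ n)
    (A B : Matrix (Fin n) (Fin n) ℝ)
    (hA : ∀ i j : Fin n, A i j = X i j)
    (hB : ∀ i j : Fin n, B i j = W i j)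
    (v : Fin n → ℝ) (hv : ∀ i : Fin n, v i = W i n)
    (e : Fin n → ℝ) (he : ∀ i : Fin n, e i = if (i : ℕ) = n - 1 then 1 else 0)
    (G : Matrix (Fin n) (Fin 2) ℝ)
    (hG : ∀ i : Fin n, G i 0 = e i ∧ G i 1 = -X n (n - 1) * v i)
    (J : Matrix (Fin 2) (Fin 2) ℝ) (hJ : J = !![0, 1; -1, 0]) :
    Aᵀ * B - B * A = G * J * Gᵀ := by
  ext i j
  have e1 : (Aᵀ * B) i j = ∑ k ∈ Finset.range n, X k i * W k j := by
    rw [Matrix.mul_apply, Finset.sum_range]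
    simp [hA, hB]
  have e2 : (B * A) i j = ∑ k ∈ Finset.range n, X k j * W i k := by
    rw [Matrix.mul_apply, Finset.sum_range]
    simp [hA, hB, mul_comm]
  have e3 : (G * J * Gᵀ) i j = G i 0 * G j 1 - G i 1 * G j 0 := by
    subst hJ
    simp [Matrix.mul_apply, Fin.sum_univ_two]
    ring
  have e4 := hdisp i j
  rw [Matrix.sub_apply, e1, e2, e3, tri_sum X htri (fun k => W k j) n i i.2,
    tri_sum X htri (fun k => W i k) n j j.2, (hG i).1, (hG i).2, (hG j).1, (hG j).2,
    he, he, hv, hv, hsymm n j]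
  simp only [mul_comm (W _ _) (X _ _)] at e4
  rw [e4]
  split_ifs <;> ring
end

section
/- Let W, X : ℕ×ℕ → ℝ be infinite matrices such that W is symmetric, X is tridiagonal (X_{i,j} = 0 whenever |i−j| > 1), and XᵀW = WX holds entrywise (terms with index −1 being zero). Fix n ≥ 2 and let A, B ∈ ℝ^{n×n} be the principal n×n sections of X and W, let e be the last standard basis vector of ℝⁿ, and let u ∈ ℝⁿ be given by u_i = W_{i,n-2} X_{n-2,n-1} + W_{i,n-1} X_{n-1,n-1} − Σ_{k=0}^{n-1} X_{k,i} W_{k,n-1} for 0 ≤ i < n. Let G = ( e | u ) ∈ ℝ^{n×2} and J = [[0,1],[−1,0]]. Then AᵀB − BA = G J Gᵀ. -/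
open Matrix

lemma aux_low (f : ℕ → ℝ) (i : ℕ) (h : ∀ k, k + 1 < i → f k = 0) :
    ∑ k ∈ Finset.range (i + 1), f k = (if i = 0 then 0 else f (i - 1)) + f i := by
  rw [Finset.sum_range_succ]
  rcases i with _ | i
  · simp
  · rw [Finset.sum_range_succ, Finset.sum_eq_zero]
    · simp
    · intro k hk
      exact h k (by have := Finset.mem_range.1 hk; omega)

lemma aux_band (f : ℕ → ℝ) (i n : ℕ) (hi : i + 1 < n)
    (h : ∀ k, (k + 1 < i ∨ i + 1 < k) → f k = 0) :
    ∑ k ∈ Finset.range n, f k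
      = (if i = 0 then 0 else f (i - 1)) + f i + f (i + 1) := by
  obtain ⟨d, rfl⟩ : ∃ d, n = i + 2 + d := ⟨n - (i + 2), by omega⟩
  rw [Finset.sum_range_add, Finset.sum_range_succ, aux_low f i (fun k hk => h k (Or.inl hk)),
    Finset.sum_eq_zero (s := Finset.range d)]
  · simp
  · intro k _
    exact h _ (Or.inr (by omega))

/-- Alternative (practical) form of the generators: if `W` is
symmetric, `X` tridiagonal, and `Xᵀ W = W X` entrywise, then with
`u_i = W_{i,n-2} X_{n-2,n-1} + W_{i,n-1} X_{n-1,n-1} - ∑_{k<n} X_{k,i} W_{k,n-1}`,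
the principal sections satisfy `Aᵀ B - B A = G J Gᵀ` for `G = (e | u)`. -/
theorem finite_section_displacement_practical_generators
    (W X : ℕ → ℕ → ℝ)
    (hsymm : ∀ i j : ℕ, W i j = W j i)
    (htri : ∀ i j : ℕ, (i + 1 < j ∨ j + 1 < i) → X i j = 0)
    (hdisp : ∀ m n : ℕ,
      (if m = 0 then 0 else X (m - 1) m * W (m - 1) n)
        + X m m * W m n + X (m + 1) m * W (m + 1) n
      = W m (n + 1) * X (n + 1) n + W m n * X n n
        + (if n = 0 then 0 else W m (n - 1) * X (n - 1) n))
    (n : ℕ) (hn : 2 ≤ n)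
    (A B : Matrix (Fin n) (Fin n) ℝ)
    (hA : ∀ i j : Fin n, A i j = X i j)
    (hB : ∀ i j : Fin n, B i j = W i j)
    (e : Fin n → ℝ) (he : ∀ i : Fin n, e i = if (i : ℕ) = n - 1 then 1 else 0)
    (u : Fin n → ℝ)
    (hu : ∀ i : Fin n, u i
      = W i (n - 2) * X (n - 2) (n - 1) + W i (n - 1) * X (n - 1) (n - 1)
        - ∑ k : Fin n, X (k : ℕ) (i : ℕ) * W (k : ℕ) (n - 1))
    (G : Matrix (Fin n) (Fin 2) ℝ)
    (hG : ∀ i : Fin n, G i 0 = e i ∧ G i 1 = u i)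
    (J : Matrix (Fin 2) (Fin 2) ℝ) (hJ : J = !![0, 1; -1, 0]) :
    Aᵀ * B - B * A = G * J * Gᵀ := by
  have hS : ∀ i j : ℕ, i + 1 < n → ∑ k : Fin n, X (k : ℕ) i * W (k : ℕ) j
      = (if i = 0 then 0 else X (i - 1) i * W (i - 1) j) + X i i * W i j
        + X (i + 1) i * W (i + 1) j := by
    intro i j hi
    rw [Fin.sum_univ_eq_sum_range (fun k => X k i * W k j) n]
    exact aux_band (fun k => X k i * W k j) i n hi
      (fun k hk => by simp [htri k i hk])
  have hL : ∀ j : ℕ, ∑ k : Fin n, X (k : ℕ) (n - 1) * W (k : ℕ) j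
      = X (n - 2) (n - 1) * W (n - 2) j + X (n - 1) (n - 1) * W (n - 1) j := by
    intro j
    rw [Fin.sum_univ_eq_sum_range (fun k => X k (n - 1) * W k j) n]
    have h := aux_low (fun k => X k (n - 1) * W k j) (n - 1)
      (fun k hk => by simp [htri k (n - 1) (Or.inl hk)])
    rw [show n - 1 + 1 = n by omega, if_neg (by omega), show n - 1 - 1 = n - 2 by omega] at h
    exact h
  have hSS : ∀ i j : ℕ, i + 1 < n → j + 1 < n →
      ∑ k : Fin n, X (k : ℕ) i * W (k : ℕ) j = ∑ k : Fin n, X (k : ℕ) j * W (k : ℕ) i := by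
    intro i j hi hj
    rw [hS i j hi, hS j i hj, hdisp i j, hsymm i (j + 1), hsymm i j, hsymm i (j - 1)]
    simp only [mul_comm (W _ _)]
    ring
  have hu' : ∀ i : Fin n, u i = ∑ k : Fin n, X (k : ℕ) (n - 1) * W (k : ℕ) i
      - ∑ k : Fin n, X (k : ℕ) (i : ℕ) * W (k : ℕ) (n - 1) := by
    intro i
    rw [hu, hL, hsymm i (n - 2), hsymm i (n - 1)]
    ring
  ext i j
  have h1 : (Aᵀ * B - B * A) i j = ∑ k : Fin n, X (k : ℕ) i * W (k : ℕ) j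
      - ∑ k : Fin n, X (k : ℕ) j * W (k : ℕ) i := by
    simp only [Matrix.sub_apply, Matrix.mul_apply, Matrix.transpose_apply, hA, hB]
    congr 1
    refine Finset.sum_congr rfl (fun k _ => ?_)
    rw [hsymm i k, mul_comm]
  have h2 : (G * J * Gᵀ) i j = e i * u j - u i * e j := by
    subst hJ
    simp [Matrix.mul_apply, Fin.sum_univ_two, (hG i).1, (hG i).2, (hG j).1, (hG j).2]
    ring
  rw [h1, h2, he, he, hu', hu']
  have hi := i.2
  have hj := j.2
  by_cases ci : (i : ℕ) = n - 1 <;> by_cases cj : (j : ℕ) = n - 1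
  · simp [ci, cj]
  · rw [if_pos ci, if_neg cj, ci]
    ring
  · rw [if_neg ci, if_pos cj, cj]
    ring
  · rw [if_neg ci, if_neg cj, hSS i j (by omega) (by omega)]
    ring
end

section
/- Let n ≥ 2 and let W₁ ∈ ℝ^{n×n} be symmetric and positive definite, partitioned as W₁ = [[d₁, l₁ᵀ],[l₁, Ŵ₁]] with d₁ ∈ ℝ, l₁ ∈ ℝ^{n-1}, Ŵ₁ ∈ ℝ^{(n-1)×(n-1)}. Let X₁ ∈ ℝ^{n×n} have the form X₁ = [[α, β e₁ᵀ],[γ e₁, X̂₁]] + e₁ r₁ᵀ, where α, β, γ ∈ ℝ, X̂₁ ∈ ℝ^{(n-1)×(n-1)} is tridiagonal, e₁ denotes the first standard basis vector (of the appropriate size), and r₁ ∈ ℝⁿ. Suppose G₁ ∈ ℝ^{n×2} and J ∈ ℝ^{2×2} satisfy the displacement equation X₁ᵀW₁ − W₁X₁ = G₁ J G₁ᵀ. Write G₁ with first row g₁ ∈ ℝ^{1×2} and remaining rows Ĝ₁ ∈ ℝ^{(n-1)×2}. Define the Schur complement W₂ = Ŵ₁ − (1/d₁) l₁ l₁ᵀ,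 and set X₂ = X̂₁ − (γ/d₁) e₁ l₁ᵀ and G₂ = Ĝ₁ − (1/d₁) l₁ g₁. Then X₂ᵀW₂ − W₂X₂ = G₂ J G₂ᵀ. -/
open Matrix

/-- One step of Cholesky factorization preserves the displacement
structure: if `X₁ᵀ W₁ - W₁ X₁ = G₁ J G₁ᵀ` with `W₁` symmetric positive definite
and `X₁` tridiagonal-plus-first-row, then the Schur complement
`W₂ = Ŵ₁ - l₁l₁ᵀ/d₁` satisfies `X₂ᵀ W₂ - W₂ X₂ = G₂ J G₂ᵀ` with
`X₂ = X̂₁ - (γ/d₁) e₁ l₁ᵀ` and `G₂ = Ĝ₁ - l₁ g₁ / d₁`.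
Here the size is `n = k + 2 ≥ 2`, indexed by `Fin 1 ⊕ Fin (k+1)`. -/
theorem displacement_schur_complement_step
    (k : ℕ)
    (W₁ X₁ : Matrix (Fin 1 ⊕ Fin (k + 1)) (Fin 1 ⊕ Fin (k + 1)) ℝ)
    (hWpd : W₁.PosDef)
    (d₁ : ℝ) (l₁ : Fin (k + 1) → ℝ) (What : Matrix (Fin (k + 1)) (Fin (k + 1)) ℝ)
    (hW : W₁ = Matrix.fromBlocks
      (Matrix.of fun _ _ => d₁)
      (Matrix.of fun _ j => l₁ j)
      (Matrix.of fun i _ => l₁ i) What)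
    (α β γ : ℝ) (Xhat : Matrix (Fin (k + 1)) (Fin (k + 1)) ℝ)
    (r₁ : Fin 1 ⊕ Fin (k + 1) → ℝ)
    (htri : ∀ i j : Fin (k + 1), ((i : ℕ) + 1 < j ∨ (j : ℕ) + 1 < i) → Xhat i j = 0)
    (hX : X₁ = Matrix.fromBlocks
      (Matrix.of fun _ _ => α)
      (Matrix.of fun _ j => if j = 0 then β else 0)
      (Matrix.of fun i _ => if i = 0 then γ else 0) Xhat
      + Matrix.vecMulVec (Pi.single (Sum.inl 0) 1) r₁)
    (G₁ : Matrix (Fin 1 ⊕ Fin (k + 1)) (Fin 2) ℝ) (J : Matrix (Fin 2) (Fin 2) ℝ)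
    (hdisp : X₁ᵀ * W₁ - W₁ * X₁ = G₁ * J * G₁ᵀ)
    (g₁ : Fin 2 → ℝ) (hg₁ : ∀ j, g₁ j = G₁ (Sum.inl 0) j)
    (Ghat : Matrix (Fin (k + 1)) (Fin 2) ℝ)
    (hGhat : ∀ i j, Ghat i j = G₁ (Sum.inr i) j)
    (W₂ X₂ : Matrix (Fin (k + 1)) (Fin (k + 1)) ℝ)
    (hW₂ : W₂ = What - (1 / d₁) • Matrix.vecMulVec l₁ l₁)
    (hX₂ : X₂ = Xhat - (γ / d₁) • Matrix.vecMulVec (Pi.single 0 1) l₁)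
    (G₂ : Matrix (Fin (k + 1)) (Fin 2) ℝ)
    (hG₂ : ∀ i j, G₂ i j = Ghat i j - (1 / d₁) * l₁ i * g₁ j) :
    X₂ᵀ * W₂ - W₂ * X₂ = G₂ * J * G₂ᵀ := by
  have hd : d₁ ≠ 0 := by
    have h := hWpd.diag_pos (i := Sum.inl 0)
    rw [hW] at h
    simp at h
    exact h.ne'
  let L : Matrix (Fin (k + 1)) (Fin 1 ⊕ Fin (k + 1)) ℝ :=
    Matrix.of fun i j => Sum.elim (fun _ => -(l₁ i / d₁)) (fun j => if i = j then 1 else 0) j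
  have hLl : ∀ i a, L i (Sum.inl a) = -(l₁ i / d₁) := fun _ _ => rfl
  have hLr : ∀ i j, L i (Sum.inr j) = if i = j then 1 else 0 := fun _ _ => rfl
  have hG : G₂ = L * G₁ := by
    ext i j
    simp [Matrix.mul_apply, Fintype.sum_sum_type, hLl, hLr, hG₂, hGhat, hg₁]
    ring
  have hWL : W₁ * Lᵀ = Matrix.fromRows 0 W₂ := by
    ext i j
    rcases i with i | i
    · simp [Matrix.mul_apply, Fintype.sum_sum_type, hLl, hLr, hW]
      field_simp
      ring
    · simp [Matrix.mul_apply, Fintype.sum_sum_type, hLl, hLr, hW, hW₂, Matrix.vecMulVec_apply]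
      ring
  have hLW : L * W₁ = Matrix.fromCols 0 W₂ := by
    ext i j
    rcases j with j | j
    · simp [Matrix.mul_apply, Fintype.sum_sum_type, hLl, hLr, hW]
      field_simp
      ring
    · simp [Matrix.mul_apply, Fintype.sum_sum_type, hLl, hLr, hW, hW₂, Matrix.vecMulVec_apply]
      ring
  have hXL : X₁ * Lᵀ = Matrix.fromRows (X₁ * Lᵀ).toRows₁ X₂ := by
    ext i j
    rcases i with i | i
    · simp
    · simp [Matrix.mul_apply, Fintype.sum_sum_type, hLl, hLr, hX, hX₂, Matrix.vecMulVec_apply,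
        Pi.single_apply]
      split_ifs <;> ring
  have key : G₂ * J * G₂ᵀ = (X₁ * Lᵀ)ᵀ * (W₁ * Lᵀ) - (L * W₁) * (X₁ * Lᵀ) := by
    have : G₂ * J * G₂ᵀ = L * (G₁ * J * G₁ᵀ) * Lᵀ := by
      rw [hG, Matrix.transpose_mul]
      simp only [Matrix.mul_assoc]
    rw [this, ← hdisp, Matrix.transpose_mul, Matrix.transpose_transpose]
    simp only [Matrix.mul_sub, Matrix.sub_mul, Matrix.mul_assoc]
  rw [key, hWL, hLW, hXL, Matrix.transpose_fromRows, Matrix.fromCols_mul_fromRows,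
    Matrix.fromCols_mul_fromRows]
  simp
end

section
/- Let T_n denote the Chebyshev polynomial of the first kind. Then ∫_{−1}^{1} T_n(x) · log(2/(1−x)) · (1−x²)^{−1/2} dx equals 2π·log 2 when n = 0, and equals π/n when n ≥ 1. -/
open Polynomial MeasureTheory Real

/-- `sin (2 n t) / sin t` as a trigonometric polynomial. -/
noncomputable def auxS (n : ℕ) (t : ℝ) : ℝ := ∑ k ∈ Finset.range n, 2 * cos ((2 * k + 1) * t)

lemma auxS_mul_sin (n : ℕ) (t : ℝ) : auxS n t * sin t = sin (2 * n * t) := by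
  induction n with
  | zero => simp [auxS]
  | succ n ih =>
    have h : auxS (n + 1) t = auxS n t + 2 * cos ((2 * n + 1) * t) := by
      simp [auxS, Finset.sum_range_succ]
    rw [h, add_mul, ih]
    have e1 : 2 * (n : ℝ) * t = (2 * n + 1) * t - t := by ring
    have e2 : 2 * ((n + 1 : ℕ) : ℝ) * t = (2 * n + 1) * t + t := by push_cast; ring
    rw [e1, e2, sin_sub, sin_add]
    ring

lemma auxS_continuous (n : ℕ) : Continuous (auxS n) := by
  unfold auxS; fun_prop

lemma integral_cos_even (k : ℕ) (hk : k ≠ 0) : ∫ t in (0 : ℝ)..(π / 2), cos (2 * k * t) = 0 := by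
  have hk' : (2 * k : ℝ) ≠ 0 := by positivity
  rw [intervalIntegral.integral_comp_mul_left (fun x => cos x) hk', integral_cos]
  have : 2 * (k : ℝ) * (π / 2) = k * π := by ring
  rw [this, sin_nat_mul_pi]
  simp

lemma integral_auxS_cos (n : ℕ) (hn : 1 ≤ n) :
    ∫ t in (0 : ℝ)..(π / 2), auxS n t * cos t = π / 2 := by
  induction n, hn using Nat.le_induction with
  | base =>
    have h : ∀ t : ℝ, auxS 1 t * cos t = 1 + cos (2 * (1 : ℕ) * t) := by
      intro t
      simp [auxS, cos_two_mul]
      ring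
    simp_rw [h]
    rw [intervalIntegral.integral_add (by simp) (Continuous.intervalIntegrable (by fun_prop) _ _),
      integral_cos_even 1 one_ne_zero]
    simp
  | succ n hn ih =>
    have h : ∀ t : ℝ, auxS (n + 1) t * cos t =
        auxS n t * cos t + (cos (2 * n * t) + cos (2 * (n + 1 : ℕ) * t)) := by
      intro t
      have h : auxS (n + 1) t = auxS n t + 2 * cos ((2 * n + 1) * t) := by
        simp [auxS, Finset.sum_range_succ]
      have e1 : 2 * (n : ℝ) * t = (2 * n + 1) * t - t := by ring
      have e2 : 2 * ((n + 1 : ℕ) : ℝ) * t = (2 * n + 1) * t + t := by push_cast; ring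
      rw [h, e1, e2, cos_sub, cos_add]
      ring
    have := auxS_continuous n
    simp_rw [h]
    rw [intervalIntegral.integral_add (Continuous.intervalIntegrable (by fun_prop) _ _)
      (Continuous.intervalIntegrable (by fun_prop) _ _),
      intervalIntegral.integral_add (Continuous.intervalIntegrable (by fun_prop) _ _)
      (Continuous.intervalIntegrable (by fun_prop) _ _), ih, integral_cos_even n (by omega),
      integral_cos_even (n + 1) (by omega)]
    simp

lemma integral_cos_log_sin (n : ℕ) (hn : 1 ≤ n) :
    ∫ t in (0 : ℝ)..(π / 2), cos (2 * n * t) * log (sin t) = -(π / (4 * n)) := by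
  have hS := auxS_continuous n
  have hpi := pi_pos
  have hlog : IntervalIntegrable (fun t => log (sin t)) volume 0 (π / 2) :=
    intervalIntegrable_log_sin
  have hi1 : IntervalIntegrable (fun t => cos (2 * n * t) * log (sin t)) volume 0 (π / 2) :=
    hlog.continuousOn_mul (by fun_prop)
  have hi2 : IntervalIntegrable (fun t => auxS n t * cos t) volume 0 (π / 2) :=
    Continuous.intervalIntegrable (by fun_prop) _ _
  have hc : Continuous (fun t => auxS n t * (sin t * log (sin t))) :=
    hS.mul (continuous_mul_log.comp continuous_sin)
  have key : ∫ t in (0 : ℝ)..(π / 2),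
      (2 * n * (cos (2 * n * t) * log (sin t)) + auxS n t * cos t) =
      auxS n (π / 2) * (sin (π / 2) * log (sin (π / 2))) - auxS n 0 * (sin 0 * log (sin 0)) := by
    refine intervalIntegral.integral_eq_sub_of_hasDerivAt_of_le (by positivity)
      (f := fun t => auxS n t * (sin t * log (sin t))) hc.continuousOn ?_
      ((hi1.const_mul _).add hi2)
    intro t ht
    have hs : 0 < sin t := sin_pos_of_pos_of_lt_pi ht.1 (by linarith [ht.2])
    have e : (fun t => auxS n t * (sin t * log (sin t))) =
        fun t => sin (2 * n * t) * log (sin t) := by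
      funext t; rw [← mul_assoc, auxS_mul_sin]
    rw [e]
    have h1 : HasDerivAt (fun t : ℝ => sin (2 * n * t)) (cos (2 * n * t) * (2 * n * 1)) t :=
      ((hasDerivAt_id t).const_mul (2 * (n : ℝ))).sin
    have h2 := h1.mul ((hasDerivAt_sin t).log hs.ne')
    refine h2.congr_deriv ?_
    rw [← auxS_mul_sin]
    field_simp
  rw [intervalIntegral.integral_add (hi1.const_mul _) hi2, intervalIntegral.integral_const_mul,
    integral_auxS_cos n hn] at key
  simp at key
  have : (n : ℝ) ≠ 0 := by positivity
  field_simp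
  linarith

lemma main_reduction (n : ℕ) :
    ∫ x in (-1 : ℝ)..1,
        (Polynomial.Chebyshev.T ℝ n).eval x * (Real.log (2 / (1 - x)) * (1 - x ^ 2) ^ (-(1 / 2) : ℝ))
      = -4 * ∫ t in (0 : ℝ)..(π / 2), cos (2 * n * t) * log (sin t) := by
  have h1 : ∫ x in (-1 : ℝ)..1,
      (Polynomial.Chebyshev.T ℝ n).eval x * (Real.log (2 / (1 - x)) * (1 - x ^ 2) ^ (-(1 / 2) : ℝ))
      = ∫ x in (-1 : ℝ)..1, ((Polynomial.Chebyshev.T ℝ n).eval x * Real.log (2 / (1 - x))) *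
        √(1 - x ^ 2)⁻¹ := by
    refine intervalIntegral.integral_congr fun x hx => ?_
    rw [Set.uIcc_of_le (by norm_num)] at hx
    have : 0 ≤ 1 - x ^ 2 := by nlinarith [hx.1, hx.2]
    rw [rpow_neg this, ← sqrt_eq_rpow, sqrt_inv, mul_assoc]
  rw [h1, ← Chebyshev.integral_measureT, Chebyshev.integral_measureT_eq_integral_cos]
  have h2 : ∀ θ : ℝ, (Polynomial.Chebyshev.T ℝ n).eval (cos θ) * Real.log (2 / (1 - cos θ)) =
      (fun t => -2 * (cos (2 * n * t) * log (sin t))) (θ / 2) := by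
    intro θ
    have h3 := Chebyshev.T_real_cos θ n
    have h4 : 1 - cos θ = 2 * sin (θ / 2) ^ 2 := by
      have := cos_two_mul' (θ / 2)
      have h5 := sin_sq_add_cos_sq (θ / 2)
      rw [show 2 * (θ / 2) = θ by ring] at this
      linarith
    have h6 : 2 / (1 - cos θ) = (sin (θ / 2) ^ 2)⁻¹ := by
      rw [h4, div_mul_eq_div_div]; norm_num
    rw [h3, h6, log_inv, log_pow]
    simp only [Int.cast_natCast]
    rw [show 2 * (n : ℝ) * (θ / 2) = n * θ by ring]
    push_cast
    ring
  simp_rw [h2]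
  rw [intervalIntegral.integral_comp_div (fun t => -2 * (cos (2 * n * t) * log (sin t))) two_ne_zero,
    intervalIntegral.integral_const_mul]
  simp
  ring

/-- The modified Chebyshev moments of the log-Chebyshev weight
`log(2/(1-x)) (1-x²)^{-1/2}`: `2π log 2` for `n = 0` and `π/n` for `n ≥ 1`. -/
theorem logChebyshev_weighted_moments (n : ℕ) :
    (n = 0 →
      ∫ x in (-1 : ℝ)..1,
        (Polynomial.Chebyshev.T ℝ n).eval x * (Real.log (2 / (1 - x)) * (1 - x ^ 2) ^ (-(1 / 2) : ℝ))
        = 2 * Real.pi * Real.log 2) ∧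
    (1 ≤ n →
      ∫ x in (-1 : ℝ)..1,
        (Polynomial.Chebyshev.T ℝ n).eval x * (Real.log (2 / (1 - x)) * (1 - x ^ 2) ^ (-(1 / 2) : ℝ))
        = Real.pi / n) := by
  constructor
  · rintro rfl
    rw [main_reduction]
    simp only [Nat.cast_zero, mul_zero, zero_mul, cos_zero, one_mul]
    rw [integral_log_sin_zero_pi_div_two]
    ring
  · intro hn
    rw [main_reduction, integral_cos_log_sin n hn]
    have : (n : ℝ) ≠ 0 := by positivity
    field_simp
end

section
/- Let μ_n = ∫_{−1}^{1} T_n(x) · log(2/(1−x)) dx, where T_n is the Chebyshev polynomial of the first kind. Then μ₀ = 2, μ₁ = 1, and for every n ≥ 1: (n+2)·μ_{n+1} − (n−2)·μ_{n−1} = 4/(1−n²) if n is even, and (n+2)·μ_{n+1} − (n−2)·μ_{n−1} = 4/(4−n²) if n is odd. -/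
open Polynomial MeasureTheory

lemma aux_intervalIntegrable_poly (P : ℝ[X]) :
    IntervalIntegrable (fun x => P.eval x) volume (-1 : ℝ) 1 :=
  P.continuous.intervalIntegrable _ _

lemma aux_intervalIntegrable_weight (P : ℝ[X]) :
    IntervalIntegrable (fun x => P.eval x * (Real.log 2 - Real.log (1 - x))) volume (-1 : ℝ) 1 := by
  refine IntervalIntegrable.continuousOn_mul ?_ P.continuous.continuousOn
  refine IntervalIntegrable.sub intervalIntegrable_const ?_
  have h := (intervalIntegral.intervalIntegrable_log' (a := 2) (b := 0)).comp_sub_left 1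
  norm_num at h
  exact h

lemma aux_weight_congr (P : ℝ[X]) :
    ∫ x in (-1 : ℝ)..1, P.eval x * Real.log (2 / (1 - x)) =
      ∫ x in (-1 : ℝ)..1, P.eval x * (Real.log 2 - Real.log (1 - x)) := by
  refine intervalIntegral.integral_congr_Ioo_of_le (by norm_num) fun x hx => ?_
  have h : (1 - x) ≠ 0 := (sub_pos.2 hx.2).ne'
  rw [Real.log_div (by norm_num) h]

/-- Integration by parts against the logarithmic weight. -/
lemma aux_parts (R : ℝ[X]) :
    ∫ x in (-1 : ℝ)..1, (derivative ((X - 1) * R)).eval x * (Real.log 2 - Real.log (1 - x)) =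
      ∫ x in (-1 : ℝ)..1, R.eval x := by
  have key : ∫ x in (-1 : ℝ)..1,
      ((derivative ((X - 1) * R)).eval x * (Real.log 2 - Real.log (1 - x)) - R.eval x) =
      (fun x : ℝ => ((X - 1) * R).eval x * (Real.log 2 - Real.log (1 - x))) 1 -
      (fun x : ℝ => ((X - 1) * R).eval x * (Real.log 2 - Real.log (1 - x))) (-1) := by
    refine intervalIntegral.integral_eq_sub_of_hasDerivAt_of_le
      (f := fun x : ℝ => ((X - 1) * R).eval x * (Real.log 2 - Real.log (1 - x)))
      (show (-1 : ℝ) ≤ 1 by norm_num) ?_ ?_ ?_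
    · have h1 : Continuous fun x : ℝ => (1 - x) * Real.log (1 - x) :=
        Real.continuous_mul_log.comp (continuous_const.sub continuous_id)
      have h2 : (fun x : ℝ => ((X - 1) * R).eval x * (Real.log 2 - Real.log (1 - x))) =
          fun x : ℝ => ((X - 1) * R).eval x * Real.log 2 +
            R.eval x * ((1 - x) * Real.log (1 - x)) := by
        funext x
        simp only [eval_mul, eval_sub, eval_X, eval_one]
        ring
      rw [h2]
      exact (((Polynomial.continuous _).mul continuous_const).add
        (R.continuous.mul h1)).continuousOn
    · intro x hx
      have hx' : 1 - x ≠ 0 := (sub_pos.2 hx.2).ne'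
      have h1 := ((X - 1) * R).hasDerivAt x
      have h2 : HasDerivAt (fun x : ℝ => Real.log 2 - Real.log (1 - x)) (1 / (1 - x)) x := by
        refine ((((hasDerivAt_id x).const_sub 1).log hx').const_sub (Real.log 2)).congr_deriv ?_
        rw [neg_div, neg_neg, id]
      refine (h1.mul h2).congr_deriv ?_
      simp only [eval_mul, eval_sub, eval_X, eval_one]
      field_simp
      ring
    · exact (aux_intervalIntegrable_weight _).sub (aux_intervalIntegrable_poly R)
  rw [intervalIntegral.integral_sub (aux_intervalIntegrable_weight _)
    (aux_intervalIntegrable_poly R)] at key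
  have e : (1 - (-1) : ℝ) = 2 := by norm_num
  simp only [e, eval_mul, eval_sub, eval_X, eval_one, sub_self, zero_mul, mul_zero] at key
  linarith

lemma aux_integral_T (n : ℤ) :
    (1 - (n : ℝ) ^ 2) * ∫ x in (-1 : ℝ)..1, (Chebyshev.T ℝ n).eval x =
      1 + ((n.negOnePow : ℤ) : ℝ) := by
  have hd : derivative (X * Chebyshev.T ℝ n + (1 - X ^ 2) * derivative (Chebyshev.T ℝ n)) =
      (1 - (n : ℝ[X]) ^ 2) * Chebyshev.T ℝ n := by
    have h := Chebyshev.one_sub_X_sq_mul_derivative_derivative_T_eq_poly_in_T (R := ℝ) n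
    simp only [Function.iterate_succ, Function.iterate_zero, Function.comp, id] at h
    simp only [derivative_add, derivative_mul, derivative_X, derivative_sub, derivative_one,
      derivative_X_pow]
    simp only [Nat.cast_ofNat, map_ofNat]
    linear_combination h
  rw [← intervalIntegral.integral_const_mul]
  have := intervalIntegral.integral_eq_sub_of_hasDerivAt (a := (-1 : ℝ)) (b := 1)
    (fun x _ => (X * Chebyshev.T ℝ n + (1 - X ^ 2) * derivative (Chebyshev.T ℝ n)).hasDerivAt x)
    (aux_intervalIntegrable_poly _)
  rw [hd] at this
  simp only [eval_mul, eval_sub, eval_one, eval_pow, eval_intCast, eval_add, eval_X,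
    Chebyshev.T_eval_one, Chebyshev.T_eval_neg_one] at this
  rw [this]
  norm_num

lemma aux_integral_T_odd (n : ℤ) (hn : Odd n) :
    ∫ x in (-1 : ℝ)..1, (Chebyshev.T ℝ n).eval x = 0 := by
  have h := intervalIntegral.integral_comp_neg (a := (-1 : ℝ)) (b := 1)
    (fun x => (Chebyshev.T ℝ n).eval x)
  simp only [Chebyshev.T_eval_neg, Int.negOnePow_odd n hn] at h
  norm_num at h
  linarith

lemma aux_deriv (n : ℤ) :
    derivative ((X - 1) * (2 * (X + 1) * Chebyshev.T ℝ n)) =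
      ((n : ℝ[X]) + 2) * Chebyshev.T ℝ (n + 1) - ((n : ℝ[X]) - 2) * Chebyshev.T ℝ (n - 1) := by
  have h := Chebyshev.one_sub_X_sq_mul_derivative_T_eq_poly_in_T (R := ℝ) (n - 1)
  have h2 := Chebyshev.T_add_one ℝ n
  simp only [sub_add_cancel] at h
  push_cast at h
  simp only [derivative_add, derivative_mul, derivative_X, derivative_sub, derivative_one,
      derivative_ofNat]
  rw [h2]
  linear_combination (-2) * h

lemma aux_integral_R (n : ℤ) :
    ∫ x in (-1 : ℝ)..1, (2 * (X + 1) * Chebyshev.T ℝ n).eval x =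
      2 * (∫ x in (-1 : ℝ)..1, (Chebyshev.T ℝ n).eval x) +
      (∫ x in (-1 : ℝ)..1, (Chebyshev.T ℝ (n + 1)).eval x) +
      (∫ x in (-1 : ℝ)..1, (Chebyshev.T ℝ (n - 1)).eval x) := by
  have e : 2 * (X + 1) * Chebyshev.T ℝ n =
      Polynomial.C 2 * Chebyshev.T ℝ n + Chebyshev.T ℝ (n + 1) + Chebyshev.T ℝ (n - 1) := by
    have h2 := Chebyshev.T_add_one ℝ n
    rw [h2, map_ofNat]
    ring
  rw [e, ← intervalIntegral.integral_const_mul, ← intervalIntegral.integral_add,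
    ← intervalIntegral.integral_add]
  · simp only [eval_add, eval_mul, eval_C]
  · exact ((aux_intervalIntegrable_poly _).const_mul 2).add (aux_intervalIntegrable_poly _)
  · exact aux_intervalIntegrable_poly _
  · exact (aux_intervalIntegrable_poly _).const_mul 2
  · exact aux_intervalIntegrable_poly _

/-- The modified Chebyshev moments `μ_n = ∫_{-1}^1 T_n(x) log(2/(1-x)) dx`
satisfy `μ₀ = 2`, `μ₁ = 1`, and for `n ≥ 1` the three-term recurrence
`(n+2) μ_{n+1} - (n-2) μ_{n-1} = 4/(1-n²)` for even `n` and `= 4/(4-n²)` for odd `n`. -/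
theorem logweight_moment_recurrence
    (μ : ℕ → ℝ)
    (hμ : ∀ n : ℕ, μ n = ∫ x in (-1 : ℝ)..1,
      (Polynomial.Chebyshev.T ℝ n).eval x * Real.log (2 / (1 - x))) :
    μ 0 = 2 ∧ μ 1 = 1 ∧ ∀ n : ℕ, 1 ≤ n →
      (Even n →
        ((n : ℝ) + 2) * μ (n + 1) - ((n : ℝ) - 2) * μ (n - 1) = 4 / (1 - (n : ℝ) ^ 2)) ∧
      (Odd n →
        ((n : ℝ) + 2) * μ (n + 1) - ((n : ℝ) - 2) * μ (n - 1) = 4 / (4 - (n : ℝ) ^ 2)) := by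
  simp only [aux_weight_congr] at hμ
  refine ⟨?_, ?_, ?_⟩
  · have h := aux_parts 1
    rw [hμ]
    simp only [derivative_mul, derivative_sub, derivative_X, derivative_one, mul_one, sub_zero,
      mul_zero, add_zero] at h
    simp only [Nat.cast_zero, Chebyshev.T_zero]
    rw [h]
    norm_num
  · have h := aux_parts (Polynomial.C (1 / 2) * (X + 1))
    rw [hμ]
    have e : derivative ((X - 1) * (Polynomial.C (1 / 2 : ℝ) * (X + 1))) = X := by
      have e2 : Polynomial.C (1 / 2 : ℝ) * 2 = 1 := by
        rw [← map_ofNat (Polynomial.C : ℝ →+* ℝ[X]) 2, ← map_mul]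
        norm_num
      simp only [derivative_mul, derivative_sub, derivative_add, derivative_X, derivative_one,
        derivative_C]
      linear_combination X * e2
    rw [e] at h
    simp only [Nat.cast_one, Chebyshev.T_one]
    rw [h]
    simp only [eval_mul, eval_C, eval_add, eval_X, eval_one]
    rw [intervalIntegral.integral_const_mul, intervalIntegral.integral_add
      (by simp) (by simp)]
    norm_num
  · intro n hn
    have main : ((n : ℝ) + 2) * μ (n + 1) - ((n : ℝ) - 2) * μ (n - 1) =
        2 * (∫ x in (-1 : ℝ)..1, (Chebyshev.T ℝ (n : ℤ)).eval x) +
        (∫ x in (-1 : ℝ)..1, (Chebyshev.T ℝ ((n : ℤ) + 1)).eval x) +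
        (∫ x in (-1 : ℝ)..1, (Chebyshev.T ℝ ((n : ℤ) - 1)).eval x) := by
      rw [← aux_integral_R, ← aux_parts, aux_deriv, hμ, hμ,
        ← intervalIntegral.integral_const_mul, ← intervalIntegral.integral_const_mul,
        ← intervalIntegral.integral_sub ((aux_intervalIntegrable_weight _).const_mul _)
          ((aux_intervalIntegrable_weight _).const_mul _)]
      congr 1
      funext x
      push_cast [hn]
      simp only [eval_sub, eval_mul, eval_add, eval_natCast, eval_ofNat]
      ring
    rw [main]
    have h0 := aux_integral_T (n : ℤ)
    have h1 := aux_integral_T ((n : ℤ) + 1)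
    have h2 := aux_integral_T ((n : ℤ) - 1)
    constructor
    · intro he
      have he' : Even (n : ℤ) := by exact_mod_cast he
      rw [aux_integral_T_odd _ he'.add_one, aux_integral_T_odd _ (he'.sub_odd odd_one)]
      rw [Int.negOnePow_even _ he'] at h0
      have hn2 : 2 ≤ n := by
        rcases he with ⟨k, rfl⟩
        omega
      have hnr : (2 : ℝ) ≤ n := by exact_mod_cast hn2
      have hne : (1 - (n : ℝ) ^ 2) ≠ 0 := by nlinarith
      rw [eq_div_iff hne]
      push_cast at h0
      norm_num at h0
      linarith
    · intro ho
      have ho' : Odd (n : ℤ) := by exact_mod_cast ho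
      rw [aux_integral_T_odd _ ho']
      rw [Int.negOnePow_even _ ho'.add_one] at h1
      rw [Int.negOnePow_even _ (ho'.sub_odd odd_one)] at h2
      have hnr : (1 : ℝ) ≤ n := by exact_mod_cast hn
      have hn2 : (n : ℝ) ≠ 2 := by
        intro h
        have : n = 2 := by exact_mod_cast h
        subst this
        exact absurd ho (by decide)
      have hm : (2 - (n : ℝ)) ≠ 0 := fun h => hn2 (by linarith)
      have hp : (n : ℝ) + 2 ≠ 0 := by linarith
      have hz : (n : ℝ) ≠ 0 := by linarith
      have hne : (4 - (n : ℝ) ^ 2) ≠ 0 := by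
        have := mul_ne_zero hm hp
        intro h
        exact this (by linarith)
      push_cast at h1 h2
      norm_num at h1 h2
      rw [eq_div_iff hne]
      apply mul_left_cancel₀ hz
      linear_combination (-(2 - (n : ℝ))) * h1 + ((n : ℝ) + 2) * h2
end

section
/- Let μ_n = ∫_{−1}^{1} T_n(x) · log(2/(1−x)) dx, where T_n is the Chebyshev polynomial of the first kind. Then for every n ≥ 0: (1 − 4n²)·μ_{2n} = 2 − Σ_{k=0}^{n−1} 4(2k+1)/(4−(2k+1)²). -/
open Polynomial MeasureTheory

namespace LogW

lemma int_poly (p : ℝ[X]) : IntervalIntegrable (fun x => p.eval x) volume (-1) 1 :=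
  p.continuous.intervalIntegrable _ _

lemma int_log (p : ℝ[X]) : IntervalIntegrable
    (fun x => p.eval x * (Real.log 2 - Real.log (1 - x))) volume (-1) 1 := by
  have h0 : IntervalIntegrable (fun x : ℝ => Real.log (1 - x)) volume (-1) 1 := by
    have h := (intervalIntegral.intervalIntegrable_log' (a := 2) (b := 0)).comp_sub_left 1
    norm_num at h
    exact h
  have h1 : IntervalIntegrable (fun x : ℝ => Real.log 2 - Real.log (1 - x)) volume (-1) 1 :=
    (intervalIntegrable_const).sub h0
  exact h1.continuousOn_mul p.continuous.continuousOn

/-- Integration by parts against the logarithmic weight. -/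
lemma parts (q : ℝ[X]) :
    ∫ x in (-1 : ℝ)..1, (derivative ((X - 1) * q)).eval x * (Real.log 2 - Real.log (1 - x))
      = ∫ x in (-1 : ℝ)..1, q.eval x := by
  have hcont : Continuous (fun x : ℝ =>
      q.eval x * ((x - 1) * Real.log 2 + (1 - x) * Real.log (1 - x))) := by
    have h := Real.continuous_mul_log.comp (continuous_const.sub continuous_id : Continuous fun x : ℝ => 1 - x)
    have hq := q.continuous
    have h2 : Continuous fun x : ℝ => (1 - x) * Real.log (1 - x) := h
    exact hq.mul (((continuous_id.sub continuous_const).mul continuous_const).add h2)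
  have key := intervalIntegral.integral_eq_sub_of_hasDerivAt_of_le (a := -1) (b := 1)
    (f := fun x : ℝ => q.eval x * ((x - 1) * Real.log 2 + (1 - x) * Real.log (1 - x)))
    (f' := fun x : ℝ => (derivative ((X - 1) * q)).eval x * (Real.log 2 - Real.log (1 - x))
      - q.eval x) (by norm_num) hcont.continuousOn ?_ ((int_log _).sub (int_poly _))
  · rw [intervalIntegral.integral_sub (int_log _) (int_poly _)] at key
    norm_num at key ⊢
    linarith
  · intro x hx
    have hx1 : (1 - x) ≠ 0 := by linarith [hx.2]
    have h1 : HasDerivAt (fun x : ℝ => 1 - x) (-1) x := by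
      simpa using (hasDerivAt_id x).const_sub 1
    have h2 : HasDerivAt (fun x : ℝ => x - 1) 1 x := (hasDerivAt_id x).sub_const 1
    have h3 := (q.hasDerivAt x).mul ((h2.mul_const (Real.log 2)).add (h1.mul (h1.log hx1)))
    refine h3.congr_deriv ?_
    simp only [derivative_mul, derivative_sub, derivative_X, derivative_one, eval_add, eval_mul,
      eval_sub, eval_X, eval_one, eval_zero, Pi.mul_apply, Pi.add_apply]
    field_simp
    ring

noncomputable def V (k : ℤ) : ℝ[X] := (Chebyshev.T ℝ k - 1) /ₘ (X - C 1)

lemma V_spec (k : ℤ) : (X - 1) * V k = Chebyshev.T ℝ k - 1 := by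
  have h : (Chebyshev.T ℝ k - 1).IsRoot 1 := by simp
  have := mul_divByMonic_eq_iff_isRoot.2 h
  simpa [V] using this

lemma X_sub_one_ne : (X - 1 : ℝ[X]) ≠ 0 := by
  simpa using X_sub_C_ne_zero (1 : ℝ)

lemma V_rec (k : ℤ) : V (k + 1) = 2 * V k - V (k - 1) + 2 * Chebyshev.T ℝ k := by
  apply mul_left_cancel₀ X_sub_one_ne
  have h1 := V_spec (k + 1)
  have h2 := V_spec k
  have h3 := V_spec (k - 1)
  have h4 := Chebyshev.T_add_one ℝ k
  linear_combination h1 - 2 * h2 + h3 + h4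

lemma V_one : V 1 = 1 := by
  apply mul_left_cancel₀ X_sub_one_ne
  simp [V_spec]

lemma V_neg_one : V (-1) = 1 := by
  apply mul_left_cancel₀ X_sub_one_ne
  simp [V_spec]

lemma V_zero : V 0 = 0 := by
  apply mul_left_cancel₀ X_sub_one_ne
  simp [V_spec]

noncomputable def I (k : ℤ) : ℝ := ∫ x in (-1 : ℝ)..1, (V k).eval x

noncomputable def J (k : ℤ) : ℝ := ∫ x in (-1 : ℝ)..1, (Chebyshev.T ℝ k).eval x

lemma I_rec (k : ℤ) : I (k + 1) = 2 * I k - I (k - 1) + 2 * J k := by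
  unfold I J
  rw [V_rec, ← intervalIntegral.integral_const_mul, ← intervalIntegral.integral_const_mul,
    ← intervalIntegral.integral_sub ((int_poly _).const_mul _) (int_poly _),
    ← intervalIntegral.integral_add (((int_poly _).const_mul _).sub (int_poly _))
      ((int_poly _).const_mul _)]
  simp

lemma J_odd (k : ℤ) : J (2 * k + 1) = 0 := by
  have h := intervalIntegral.integral_comp_neg (a := -1) (b := 1)
    (fun x : ℝ => (Chebyshev.T ℝ (2 * k + 1)).eval x)
  have hodd : (2 * k + 1).negOnePow = -1 := Int.negOnePow_odd _ ⟨k, rfl⟩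
  simp only [Chebyshev.T_eval_neg, hodd] at h
  simp at h
  unfold J
  linarith

lemma deriv_T (m : ℤ) :
    derivative (C ((1 - (m : ℝ)) / 2) * Chebyshev.T ℝ (m + 1)
      + C ((1 + (m : ℝ)) / 2) * Chebyshev.T ℝ (m - 1))
      = C (1 - (m : ℝ) ^ 2) * Chebyshev.T ℝ m := by
  have h := Chebyshev.two_mul_T_eq_U_sub_U ℝ (m - 2)
  rw [show m - 2 + 2 = m by ring] at h
  have hT : Chebyshev.T ℝ m = C (1 / 2) * (Chebyshev.U ℝ m - Chebyshev.U ℝ (m - 2)) := by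
    rw [← h, ← mul_assoc, show (2 : ℝ[X]) = C 2 from (map_ofNat C 2).symm, ← C_mul]; norm_num
  rw [hT]
  simp only [derivative_add, derivative_mul, derivative_C, Chebyshev.T_derivative_eq_U]
  rw [show m + 1 - 1 = m by ring, show m - 1 - 1 = m - 2 by ring]
  ext i
  rw [show ((m + 1 : ℤ) : ℝ[X]) = C ((m : ℝ) + 1) by simp,
    show ((m - 1 : ℤ) : ℝ[X]) = C ((m : ℝ) - 1) by simp]
  simp only [zero_mul, zero_add, coeff_add, coeff_C_mul, coeff_sub]
  ring

lemma J_even (k : ℤ) : (1 - (2 * (k : ℝ)) ^ 2) * J (2 * k) = 2 := by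
  unfold J
  rw [← intervalIntegral.integral_const_mul]
  have h := intervalIntegral.integral_eq_sub_of_hasDerivAt (a := -1) (b := 1)
    (fun x _ => (C ((1 - ((2 * k : ℤ) : ℝ)) / 2) * Chebyshev.T ℝ (2 * k + 1)
      + C ((1 + ((2 * k : ℤ) : ℝ)) / 2) * Chebyshev.T ℝ (2 * k - 1)).hasDerivAt x) (int_poly _)
  rw [deriv_T] at h
  have h1 : (2 * k + 1).negOnePow = -1 := Int.negOnePow_odd _ ⟨k, rfl⟩
  have h2 : (2 * k - 1).negOnePow = -1 := Int.negOnePow_odd _ ⟨k - 1, by ring⟩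
  simp only [eval_add, eval_mul, eval_C, Chebyshev.T_eval_one, Chebyshev.T_eval_neg_one, h1, h2] at h
  push_cast at h
  rw [h]
  norm_num
  ring

lemma mom (m : ℤ) :
    (1 - (m : ℝ) ^ 2) * ∫ x in (-1 : ℝ)..1,
      (Chebyshev.T ℝ m).eval x * Real.log (2 / (1 - x))
      = (1 - (m : ℝ)) / 2 * I (m + 1) + (1 + (m : ℝ)) / 2 * I (m - 1) := by
  have hc : ∫ x in (-1 : ℝ)..1, (Chebyshev.T ℝ m).eval x * Real.log (2 / (1 - x))
      = ∫ x in (-1 : ℝ)..1, (Chebyshev.T ℝ m).eval x * (Real.log 2 - Real.log (1 - x)) := by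
    apply intervalIntegral.integral_congr_ae
    have : ∀ᵐ x : ℝ, x ≠ 1 := by
      simp [ae_iff]
    filter_upwards [this] with x hx _
    rw [Real.log_div (by norm_num) (sub_ne_zero.2 hx.symm)]
  have hp := parts (C ((1 - (m : ℝ)) / 2) * V (m + 1) + C ((1 + (m : ℝ)) / 2) * V (m - 1))
  have hd : (X - 1) * (C ((1 - (m : ℝ)) / 2) * V (m + 1) + C ((1 + (m : ℝ)) / 2) * V (m - 1))
      = (C ((1 - (m : ℝ)) / 2) * Chebyshev.T ℝ (m + 1)
      + C ((1 + (m : ℝ)) / 2) * Chebyshev.T ℝ (m - 1)) -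
        C ((1 - (m : ℝ)) / 2 + (1 + (m : ℝ)) / 2) := by
    rw [C_add]
    linear_combination C ((1 - (m : ℝ)) / 2) * V_spec (m + 1)
      + C ((1 + (m : ℝ)) / 2) * V_spec (m - 1)
  rw [hd, derivative_sub, deriv_T, derivative_C, sub_zero] at hp
  rw [hc, ← intervalIntegral.integral_const_mul]
  unfold I
  rw [← intervalIntegral.integral_const_mul, ← intervalIntegral.integral_const_mul,
    ← intervalIntegral.integral_add ((int_poly _).const_mul _) ((int_poly _).const_mul _)]
  simpa only [eval_add, eval_mul, eval_C, mul_assoc] using hp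

lemma ne1 (n : ℕ) : (1 - (2 * (n : ℝ)) ^ 2) ≠ 0 := by
  have : (1 - (2 * (n : ℤ)) ^ 2) ≠ 0 := by
    intro h
    have : (2 * (n : ℤ)) ^ 2 = 2 * (2 * n ^ 2) := by ring
    omega
  exact_mod_cast this

lemma main (n : ℕ) : (1 - 2 * (n : ℝ)) / 2 * I (2 * n + 1) + (1 + 2 * (n : ℝ)) / 2 * I (2 * n - 1)
      = 2 - ∑ k ∈ Finset.range n, 4 * (2 * (k : ℝ) + 1) / (4 - (2 * (k : ℝ) + 1) ^ 2) := by
  induction n with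
  | zero => simp [I, V_one, V_neg_one]; norm_num
  | succ n ih =>
    rw [Finset.sum_range_succ, ← sub_sub, ← ih]
    have r0 := I_rec (2 * n)
    have r1 := I_rec (2 * n + 1)
    have r2 := I_rec (2 * n + 2)
    have j0 := J_even n
    have j1 := J_odd n
    have j2 := J_even (n + 1)
    have e0 := ne1 n
    have e1 := ne1 (n + 1)
    rw [j1] at r1
    rw [show (2 * (n : ℤ) + 1 + 1) = 2 * n + 2 by ring, show (2 * (n : ℤ) + 1 - 1) = 2 * n by ring] at r1
    rw [show (2 * (n : ℤ) + 2 + 1) = 2 * n + 3 by ring, show (2 * (n : ℤ) + 2 - 1) = 2 * n + 1 by ring] at r2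
    rw [show (2 * ((n : ℤ) + 1)) = 2 * n + 2 by ring] at j2
    push_cast at j0 j2 e0 e1 ⊢
    rw [show (2 * ((n : ℤ) + 1) + 1) = 2 * n + 3 by ring, show (2 * ((n : ℤ) + 1) - 1) = 2 * n + 1 by ring]
    have j0' : J (2 * n) = 2 / (1 - (2 * (n : ℝ)) ^ 2) := by
      rw [eq_div_iff e0]; linarith
    have j2' : J (2 * n + 2) = 2 / (1 - (2 * ((n : ℝ) + 1)) ^ 2) := by
      rw [eq_div_iff e1]; linarith
    have f1 : (1 - 2 * (n : ℝ)) ≠ 0 := fun h => e0 (by linear_combination (1 + 2 * (n : ℝ)) * h)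
    have f2 : (1 + 2 * (n : ℝ)) ≠ 0 := by positivity
    have f3 : (3 + 2 * (n : ℝ)) ≠ 0 := by positivity
    rw [j0', show 1 - (2 * (n : ℝ)) ^ 2 = (1 - 2 * n) * (1 + 2 * n) by ring] at r0
    rw [j2', show 1 - (2 * ((n : ℝ) + 1)) ^ 2 = -((1 + 2 * n) * (3 + 2 * n)) by ring] at r2
    rw [show 4 - (2 * (n : ℝ) + 1) ^ 2 = (1 - 2 * n) * (3 + 2 * n) by ring]
    have g : I (2 * n - 1) = 2 * I (2 * n) - I (2 * n + 1)
        + 2 * (2 / ((1 - 2 * (n : ℝ)) * (1 + 2 * n))) := by linarith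
    rw [g, r2, r1]
    field_simp
    ring

end LogW

/-- For the moments `μ_n = ∫_{-1}^1 T_n(x) log(2/(1-x)) dx`, the even
moments satisfy `(1 - 4n²) μ_{2n} = 2 - ∑_{k=0}^{n-1} 4(2k+1)/(4-(2k+1)²)`. -/
theorem logweight_even_moments
    (μ : ℕ → ℝ)
    (hμ : ∀ n : ℕ, μ n = ∫ x in (-1 : ℝ)..1,
      (Polynomial.Chebyshev.T ℝ n).eval x * Real.log (2 / (1 - x))) :
    ∀ n : ℕ, (1 - 4 * (n : ℝ) ^ 2) * μ (2 * n)
      = 2 - ∑ k ∈ Finset.range n, 4 * (2 * (k : ℝ) + 1) / (4 - (2 * (k : ℝ) + 1) ^ 2) := by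
  intro n
  have h := LogW.mom (2 * n)
  rw [hμ, ← LogW.main n]
  push_cast at h ⊢
  rw [← h]
  ring
end

section
/- Let w : ℝ → ℝ be of bounded variation on [−1,1] and integrable on [−1,1], let M = sup_{x ∈ [−1,1]} |w(x)| and let V be the total variation of w on [−1,1]. Then for every n ≥ 2: |∫_{−1}^{1} T_n(x) w(x) dx| ≤ 2M/(n−1)² + V/(n−1). -/
open Polynomial MeasureTheory

/-- One-piece estimate. -/
lemma piece_bound (w : ℝ → ℝ) (F : ℝ[X]) (K a b : ℝ) (hab : a ≤ b)
    (ha : -1 ≤ a) (hb : b ≤ 1)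
    (hBV : BoundedVariationOn w (Set.Icc a b))
    (hInt : IntervalIntegrable w volume a b)
    (hp : ∀ x ∈ Set.Icc (-1 : ℝ) 1, |(derivative F).eval x| ≤ 1)
    (hF : ∀ x ∈ Set.Icc (-1 : ℝ) 1, |F.eval x| ≤ K) :
    |(∫ x in a..b, (derivative F).eval x * w x) - (F.eval b * w b - F.eval a * w a)|
      ≤ (K + (b - a)) * (eVariationOn w (Set.Icc a b)).toReal := by
  set v := (eVariationOn w (Set.Icc a b)).toReal with hv
  have hv0 : 0 ≤ v := ENNReal.toReal_nonneg
  have hd : ∀ x ∈ Set.Icc a b, |w x - w a| ≤ v := by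
    intro x hx
    rw [← Real.dist_eq]
    exact hBV.dist_le hx ⟨le_rfl, hab⟩
  have hi1 : IntervalIntegrable (fun x => (derivative F).eval x * w x) volume a b :=
    hInt.continuousOn_mul (Polynomial.continuous _).continuousOn
  have hi2 : IntervalIntegrable (fun x => (derivative F).eval x * w a) volume a b :=
    ((Polynomial.continuous _).mul continuous_const).intervalIntegrable _ _
  have hftc : ∫ x in a..b, (derivative F).eval x = F.eval b - F.eval a :=
    intervalIntegral.integral_eq_sub_of_hasDerivAt (fun x _ => F.hasDerivAt x)
      ((Polynomial.continuous _).intervalIntegrable _ _)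
  have h1 : ∫ x in a..b, (derivative F).eval x * (w x - w a)
      = (∫ x in a..b, (derivative F).eval x * w x) - (F.eval b - F.eval a) * w a := by
    simp_rw [mul_sub]
    rw [intervalIntegral.integral_sub hi1 hi2, intervalIntegral.integral_mul_const, hftc]
  have h2 : |∫ x in a..b, (derivative F).eval x * (w x - w a)| ≤ v * (b - a) := by
    rw [← abs_of_nonneg (sub_nonneg.2 hab), ← Real.norm_eq_abs]
    apply intervalIntegral.norm_integral_le_of_norm_le_const
    intro x hx
    rw [Set.uIoc_of_le hab] at hx
    have hx' : x ∈ Set.Icc a b := ⟨hx.1.le, hx.2⟩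
    rw [Real.norm_eq_abs, abs_mul]
    calc _ ≤ 1 * v := mul_le_mul (hp x ⟨by linarith [hx'.1], by linarith [hx'.2]⟩) (hd x hx')
            (abs_nonneg _) zero_le_one
      _ = v := one_mul v
  have h3 : |F.eval b * (w b - w a)| ≤ K * v := by
    rw [abs_mul]
    have hb' := hF b ⟨by linarith, hb⟩
    exact mul_le_mul hb' (hd b ⟨hab, le_rfl⟩) (abs_nonneg _) ((abs_nonneg _).trans hb')
  have h4 : (∫ x in a..b, (derivative F).eval x * w x) - (F.eval b * w b - F.eval a * w a)
      = (∫ x in a..b, (derivative F).eval x * (w x - w a)) - F.eval b * (w b - w a) := by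
    rw [h1]; ring
  rw [h4]
  calc _ ≤ _ := abs_sub _ _
    _ ≤ v * (b - a) + K * v := add_le_add h2 h3
    _ = _ := by ring

lemma sum_bound (w : ℝ → ℝ) (F : ℝ[X]) (K : ℝ)
    (hBV : BoundedVariationOn w (Set.Icc (-1 : ℝ) 1))
    (hInt : IntervalIntegrable w volume (-1) 1)
    (hp : ∀ x ∈ Set.Icc (-1 : ℝ) 1, |(derivative F).eval x| ≤ 1)
    (hF : ∀ x ∈ Set.Icc (-1 : ℝ) 1, |F.eval x| ≤ K) (N : ℕ) :
    |(∫ x in (-1 : ℝ)..1, (derivative F).eval x * w x)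
        - (F.eval 1 * w 1 - F.eval (-1) * w (-1))|
      ≤ (K + 2 * (1 / ((N : ℝ) + 1))) * (eVariationOn w (Set.Icc (-1 : ℝ) 1)).toReal := by
  set h : ℝ := 2 * (1 / ((N : ℝ) + 1)) with hh
  have hh0 : 0 ≤ h := by positivity
  set I : ℕ → ℝ := fun i => -1 + i * h with hI
  have hI0 : I 0 = -1 := by simp [hI]
  have hIN : I (N + 1) = 1 := by
    have : (N : ℝ) + 1 ≠ 0 := by positivity
    simp only [hI, hh]; push_cast; field_simp; ring
  have hmono : Monotone I := by
    intro i j hij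
    have : (i : ℝ) ≤ j := by exact_mod_cast hij
    simp only [hI]
    nlinarith
  have hstep : ∀ i, I (i + 1) - I i = h := by
    intro i; simp only [hI]; push_cast; ring
  have hlo : ∀ i, -1 ≤ I i := fun i => hI0 ▸ hmono (Nat.zero_le i)
  have hhi : ∀ i, i ≤ N + 1 → I i ≤ 1 := fun i hi => hIN ▸ hmono hi
  have hsub : ∀ i, i < N + 1 → Set.Icc (I i) (I (i + 1)) ⊆ Set.Icc (-1 : ℝ) 1 :=
    fun i hi => Set.Icc_subset_Icc (hlo i) (hhi _ hi)
  have hInt' : ∀ i, i < N + 1 → IntervalIntegrable w volume (I i) (I (i + 1)) := by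
    intro i hi
    apply hInt.mono_set
    rw [Set.uIcc_of_le (hmono (Nat.le_succ i)), Set.uIcc_of_le (by norm_num)]
    exact hsub i hi
  have hs1 : ∑ i ∈ Finset.range (N + 1), ∫ x in (I i)..(I (i + 1)), (derivative F).eval x * w x
      = ∫ x in (-1 : ℝ)..1, (derivative F).eval x * w x := by
    rw [intervalIntegral.sum_integral_adjacent_intervals, hI0, hIN]
    intro k hk
    exact (hInt' k hk).continuousOn_mul (Polynomial.continuous _).continuousOn
  have hs2 : ∑ i ∈ Finset.range (N + 1),
      (F.eval (I (i + 1)) * w (I (i + 1)) - F.eval (I i) * w (I i))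
      = F.eval 1 * w 1 - F.eval (-1) * w (-1) := by
    rw [Finset.sum_range_sub (fun i => F.eval (I i) * w (I i)), hI0, hIN]
  have hs3 : ∑ i ∈ Finset.range (N + 1), (eVariationOn w (Set.Icc (I i) (I (i + 1)))).toReal
      = (eVariationOn w (Set.Icc (-1 : ℝ) 1)).toReal := by
    rw [← ENNReal.toReal_sum, eVariationOn.sum' w hmono, hI0, hIN]
    intro i hi
    exact hBV.mono (hsub i (Finset.mem_range.1 hi))
  rw [← hs1, ← hs2, ← hs3, ← Finset.sum_sub_distrib, Finset.mul_sum]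
  refine (Finset.abs_sum_le_sum_abs _ _).trans (Finset.sum_le_sum fun i hi => ?_)
  have hi' := Finset.mem_range.1 hi
  rw [← hstep i]
  exact piece_bound w F K _ _ (hmono (Nat.le_succ i)) (hlo i) (hhi _ hi')
    (hBV.mono (hsub i hi')) (hInt' i hi') hp hF

lemma limit_bound (w : ℝ → ℝ) (F : ℝ[X]) (K : ℝ)
    (hBV : BoundedVariationOn w (Set.Icc (-1 : ℝ) 1))
    (hInt : IntervalIntegrable w volume (-1) 1)
    (hp : ∀ x ∈ Set.Icc (-1 : ℝ) 1, |(derivative F).eval x| ≤ 1)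
    (hF : ∀ x ∈ Set.Icc (-1 : ℝ) 1, |F.eval x| ≤ K) :
    |(∫ x in (-1 : ℝ)..1, (derivative F).eval x * w x)
        - (F.eval 1 * w 1 - F.eval (-1) * w (-1))|
      ≤ K * (eVariationOn w (Set.Icc (-1 : ℝ) 1)).toReal := by
  have ht : Filter.Tendsto (fun N : ℕ => (K + 2 * (1 / ((N : ℝ) + 1))) *
      (eVariationOn w (Set.Icc (-1 : ℝ) 1)).toReal) Filter.atTop
      (nhds ((K + 2 * 0) * (eVariationOn w (Set.Icc (-1 : ℝ) 1)).toReal)) :=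
    ((tendsto_one_div_add_atTop_nhds_zero_nat.const_mul 2).const_add K).mul_const _
  have := ge_of_tendsto' ht (sum_bound w F K hBV hInt hp hF)
  simpa using this

/-- If `w` is of bounded variation and integrable on `[-1,1]`, with
`M = sup_{[-1,1]} |w|` and `V` the total variation of `w` on `[-1,1]`, then for
`n ≥ 2`, `|∫ T_n w| ≤ 2M/(n-1)² + V/(n-1)`. -/
theorem chebyshev_moment_bound_BV
    (w : ℝ → ℝ)
    (hBV : BoundedVariationOn w (Set.Icc (-1 : ℝ) 1))
    (hInt : IntervalIntegrable w MeasureTheory.volume (-1) 1)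
    (M V : ℝ)
    (hM : M = sSup ((fun x => |w x|) '' Set.Icc (-1 : ℝ) 1))
    (hV : V = (eVariationOn w (Set.Icc (-1 : ℝ) 1)).toReal)
    (n : ℕ) (hn : 2 ≤ n) :
    |∫ x in (-1 : ℝ)..1, (Polynomial.Chebyshev.T ℝ n).eval x * w x|
      ≤ 2 * M / ((n : ℝ) - 1) ^ 2 + V / ((n : ℝ) - 1) := by
  have hn' : (2 : ℝ) ≤ n := by exact_mod_cast hn
  have hm0 : (0 : ℝ) < (n : ℝ) - 1 := by linarith
  have hq0 : (0 : ℝ) < (n : ℝ) + 1 := by linarith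
  have hbdd : BddAbove ((fun x => |w x|) '' Set.Icc (-1 : ℝ) 1) := by
    refine ⟨|w 1| + V, ?_⟩
    rintro _ ⟨x, hx, rfl⟩
    have h1 : |w x - w 1| ≤ V := by
      rw [← Real.dist_eq, hV]
      exact hBV.dist_le hx (by simp)
    have h2 := abs_sub_abs_le_abs_sub (w x) (w 1)
    show |w x| ≤ _
    linarith
  have hMle : ∀ x ∈ Set.Icc (-1 : ℝ) 1, |w x| ≤ M := fun x hx => by
    rw [hM]; exact le_csSup hbdd ⟨x, hx, rfl⟩
  have hw1 := hMle 1 (by simp)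
  have hw2 := hMle (-1) (by simp)
  have hM0 : 0 ≤ M := (abs_nonneg _).trans hw1
  have hV0 : 0 ≤ V := hV ▸ ENNReal.toReal_nonneg
  set F : ℝ[X] := C (1 / (2 * ((n : ℝ) + 1))) * Chebyshev.T ℝ ((n : ℤ) + 1)
    - C (1 / (2 * ((n : ℝ) - 1))) * Chebyshev.T ℝ ((n : ℤ) - 1) with hFdef
  have hFe : ∀ x, F.eval x = 1 / (2 * ((n : ℝ) + 1)) * (Chebyshev.T ℝ ((n : ℤ) + 1)).eval x
    - 1 / (2 * ((n : ℝ) - 1)) * (Chebyshev.T ℝ ((n : ℤ) - 1)).eval x := by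
    intro x; simp [hFdef]
  have hder : ∀ x, (derivative F).eval x = (Chebyshev.T ℝ n).eval x := by
    intro x
    have h := congrArg (Polynomial.eval x) (Chebyshev.two_mul_T_eq_U_sub_U ℝ ((n : ℤ) - 2))
    simp only [sub_add_cancel, eval_mul, eval_sub, eval_ofNat] at h
    have e1 : ((n : ℤ) + 1 - 1) = n := by ring
    have e2 : ((n : ℤ) - 1 - 1) = n - 2 := by ring
    simp only [hFdef, derivative_sub, derivative_C_mul, Chebyshev.T_derivative_eq_U, e1, e2,
      eval_sub, eval_mul, eval_C, eval_intCast]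
    push_cast
    field_simp
    linarith
  have hT : ∀ k : ℤ, ∀ x ∈ Set.Icc (-1 : ℝ) 1, |(Chebyshev.T ℝ k).eval x| ≤ 1 :=
    fun k x hx => Chebyshev.abs_eval_T_real_le_one k (abs_le.2 hx)
  have hp : ∀ x ∈ Set.Icc (-1 : ℝ) 1, |(derivative F).eval x| ≤ 1 := by
    intro x hx; rw [hder]; exact hT _ x hx
  have hle : 1 / (2 * ((n : ℝ) + 1)) ≤ 1 / (2 * ((n : ℝ) - 1)) := by
    apply one_div_le_one_div_of_le <;> linarith
  have hsum : 1 / (2 * ((n : ℝ) - 1)) + 1 / (2 * ((n : ℝ) - 1)) = 1 / ((n : ℝ) - 1) := by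
    field_simp; norm_num
  have hF : ∀ x ∈ Set.Icc (-1 : ℝ) 1, |F.eval x| ≤ 1 / ((n : ℝ) - 1) := by
    intro x hx
    rw [hFe]
    refine (abs_sub _ _).trans ?_
    rw [abs_mul, abs_mul, abs_of_pos (a := 1 / (2 * ((n : ℝ) + 1))) (by positivity),
      abs_of_pos (a := 1 / (2 * ((n : ℝ) - 1))) (by positivity), ← hsum]
    refine add_le_add (le_trans ?_ hle) ?_
    · exact mul_le_of_le_one_right (by positivity) (hT _ x hx)
    · exact mul_le_of_le_one_right (by positivity) (hT _ x hx)
  have hend : ∀ x ∈ Set.Icc (-1 : ℝ) 1,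
      (Chebyshev.T ℝ ((n : ℤ) + 1)).eval x = (Chebyshev.T ℝ ((n : ℤ) - 1)).eval x →
      |F.eval x| ≤ 1 / ((n : ℝ) - 1) ^ 2 := by
    intro x hx h
    have e : F.eval x = -(1 / (((n : ℝ) - 1) * ((n : ℝ) + 1)))
        * (Chebyshev.T ℝ ((n : ℤ) - 1)).eval x := by
      rw [hFe, h]; field_simp; ring
    rw [e, abs_mul, abs_neg, abs_of_pos (a := 1 / (((n : ℝ) - 1) * ((n : ℝ) + 1))) (by positivity)]
    refine (mul_le_of_le_one_right (by positivity) (hT _ x hx)).trans ?_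
    apply one_div_le_one_div_of_le (by positivity)
    nlinarith
  have hF1 := hend 1 (by simp) (by simp)
  have hF2 := hend (-1) (by simp) (by
    rw [Chebyshev.T_eval_neg_one, Chebyshev.T_eval_neg_one,
      Int.negOnePow_add, Int.negOnePow_sub])
  have key := limit_bound w F _ hBV hInt hp hF
  simp only [hder] at key
  rw [← hV] at key
  have hb1 : |F.eval 1 * w 1| ≤ 1 / ((n : ℝ) - 1) ^ 2 * M := by
    rw [abs_mul]; exact mul_le_mul hF1 hw1 (abs_nonneg _) (by positivity)
  have hb2 : |F.eval (-1) * w (-1)| ≤ 1 / ((n : ℝ) - 1) ^ 2 * M := by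
    rw [abs_mul]; exact mul_le_mul hF2 hw2 (abs_nonneg _) (by positivity)
  have hb := abs_sub (F.eval 1 * w 1) (F.eval (-1) * w (-1))
  have ht := abs_sub_abs_le_abs_sub
    (∫ x in (-1 : ℝ)..1, (Polynomial.Chebyshev.T ℝ n).eval x * w x)
    (F.eval 1 * w 1 - F.eval (-1) * w (-1))
  have e1 : 2 * M / ((n : ℝ) - 1) ^ 2 = 1 / ((n : ℝ) - 1) ^ 2 * M + 1 / ((n : ℝ) - 1) ^ 2 * M := by
    ring
  have e2 : V / ((n : ℝ) - 1) = 1 / ((n : ℝ) - 1) * V := by ring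
  rw [e1, e2]
  linarith
end

section
/- Let w : ℝ → ℝ be differentiable on an open set containing [−1,1] with derivative w′, and suppose w′ is of bounded variation on [−1,1]. Let M = sup_{x ∈ [−1,1]} |w(x)|, M′ = sup_{x ∈ [−1,1]} |w′(x)|, and let V′ be the total variation of w′ on [−1,1]. Then for every n ≥ 3: |∫_{−1}^{1} T_n(x) w(x) dx| ≤ 2M/(n−1)² + 2M′/(n−2)³ + V′/(n−2)². -/
open Polynomial MeasureTheory

namespace ChebBV

lemma bv_intervalIntegrable {g : ℝ → ℝ} {a b : ℝ} (hab : a ≤ b)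
    (h : BoundedVariationOn g (Set.Icc a b)) : IntervalIntegrable g volume a b := by
  obtain ⟨p, q, hp, hq, rfl⟩ := h.locallyBoundedVariationOn.exists_monotoneOn_sub_monotoneOn
  rw [← Set.uIcc_of_le hab] at hp hq
  exact hp.intervalIntegrable.sub hq.intervalIntegrable

lemma var_split {g : ℝ → ℝ} {a b c : ℝ} (hab : a ≤ b) (hbc : b ≤ c)
    (h : BoundedVariationOn g (Set.Icc a c)) :
    (eVariationOn g (Set.Icc a b)).toReal + (eVariationOn g (Set.Icc b c)).toReal
      = (eVariationOn g (Set.Icc a c)).toReal := by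
  have := eVariationOn.Icc_add_Icc g (s := Set.univ) hab hbc (Set.mem_univ b)
  simp only [Set.univ_inter] at this
  rw [← this, ENNReal.toReal_add]
  · exact h.mono (Set.Icc_subset_Icc le_rfl hbc)
  · exact h.mono (Set.Icc_subset_Icc hab le_rfl)

/-- Integration by parts estimate against a function of bounded variation, with an error term. -/
lemma parts_step {A B g : ℝ → ℝ} {K L : ℝ}
    (hB : ∀ x, HasDerivAt B (A x) x) (hA : Continuous A) (k : ℕ) :
    ∀ a b : ℝ, a ≤ b → BoundedVariationOn g (Set.Icc a b) →
      (∀ x ∈ Set.Icc a b, |B x| ≤ K) → (∀ x ∈ Set.Icc a b, |A x| ≤ L) →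
      |(∫ x in a..b, A x * g x) - (B b * g b - B a * g a)|
        ≤ (K + L * (1 / 2) ^ k * (b - a)) * (eVariationOn g (Set.Icc a b)).toReal := by
  induction k with
  | zero =>
    intro a b hab hg hK hL
    have hgi := bv_intervalIntegrable hab hg
    have hAg : IntervalIntegrable (fun x => A x * g x) volume a b :=
      hgi.continuousOn_mul hA.continuousOn
    have hAi : IntervalIntegrable (fun x => A x * g a) volume a b :=
      (hA.mul continuous_const).intervalIntegrable _ _
    have h1 : ∫ x in a..b, A x * (g x - g a)
        = (∫ x in a..b, A x * g x) - (B b - B a) * g a := by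
      simp only [mul_sub]
      rw [intervalIntegral.integral_sub hAg hAi, intervalIntegral.integral_mul_const,
        intervalIntegral.integral_eq_sub_of_hasDerivAt (fun x _ => hB x)
          (hA.intervalIntegrable _ _)]
    set V := (eVariationOn g (Set.Icc a b)).toReal with hV
    have hd : ∀ x ∈ Set.Icc a b, |g x - g a| ≤ V := fun x hx => by
      simpa [Real.dist_eq] using hg.dist_le hx (Set.left_mem_Icc.2 hab)
    have hV0 : 0 ≤ V := ENNReal.toReal_nonneg
    have hL0 : 0 ≤ L := (abs_nonneg _).trans (hL a (Set.left_mem_Icc.2 hab))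
    have h2 : |∫ x in a..b, A x * (g x - g a)| ≤ (L * V) * |b - a| := by
      rw [← Real.norm_eq_abs]
      refine intervalIntegral.norm_integral_le_of_norm_le_const fun x hx => ?_
      rw [Set.uIoc_of_le hab] at hx
      have hx' := Set.Ioc_subset_Icc_self hx
      rw [Real.norm_eq_abs, abs_mul]
      exact mul_le_mul (hL x hx') (hd x hx') (abs_nonneg _) hL0
    rw [abs_of_nonneg (sub_nonneg.2 hab)] at h2
    have hb := Set.right_mem_Icc.2 hab
    have h3 : |B b * (g b - g a)| ≤ K * V := by
      rw [abs_mul]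
      exact mul_le_mul (hK b hb) (hd b hb) (abs_nonneg _) ((abs_nonneg _).trans (hK b hb))
    have h4 : (∫ x in a..b, A x * g x) - (B b * g b - B a * g a)
        = (∫ x in a..b, A x * (g x - g a)) - B b * (g b - g a) := by
      rw [h1]; ring
    rw [h4]
    refine (abs_sub _ _).trans ?_
    rw [pow_zero]
    linarith
  | succ k ih =>
    intro a b hab hg hK hL
    set c := (a + b) / 2 with hc
    have hac : a ≤ c := by rw [hc]; linarith
    have hcb : c ≤ b := by rw [hc]; linarith
    have s1 : Set.Icc a c ⊆ Set.Icc a b := Set.Icc_subset_Icc le_rfl hcb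
    have s2 : Set.Icc c b ⊆ Set.Icc a b := Set.Icc_subset_Icc hac le_rfl
    have i1 := ih a c hac (hg.mono s1) (fun x hx => hK x (s1 hx)) (fun x hx => hL x (s1 hx))
    have i2 := ih c b hcb (hg.mono s2) (fun x hx => hK x (s2 hx)) (fun x hx => hL x (s2 hx))
    have e1 : IntervalIntegrable (fun x => A x * g x) volume a c :=
      (bv_intervalIntegrable hac (hg.mono s1)).continuousOn_mul hA.continuousOn
    have e2 : IntervalIntegrable (fun x => A x * g x) volume c b :=
      (bv_intervalIntegrable hcb (hg.mono s2)).continuousOn_mul hA.continuousOn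
    rw [← var_split hac hcb hg, ← intervalIntegral.integral_add_adjacent_intervals e1 e2]
    have d1 : c - a = (b - a) / 2 := by rw [hc]; ring
    have d2 : b - c = (b - a) / 2 := by rw [hc]; ring
    rw [d1] at i1
    rw [d2] at i2
    have h4 : ((∫ x in a..c, A x * g x) + ∫ x in c..b, A x * g x) - (B b * g b - B a * g a)
      = ((∫ x in a..c, A x * g x) - (B c * g c - B a * g a))
        + ((∫ x in c..b, A x * g x) - (B b * g b - B c * g c)) := by ring
    rw [h4]
    refine (abs_add_le _ _).trans ((add_le_add i1 i2).trans (le_of_eq ?_))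
    rw [pow_succ]; ring

lemma parts_bound {A B g : ℝ → ℝ} {K a b : ℝ}
    (hB : ∀ x, HasDerivAt B (A x) x) (hA : Continuous A) (hab : a ≤ b)
    (hg : BoundedVariationOn g (Set.Icc a b)) (hK : ∀ x ∈ Set.Icc a b, |B x| ≤ K) :
    |(∫ x in a..b, A x * g x) - (B b * g b - B a * g a)|
      ≤ K * (eVariationOn g (Set.Icc a b)).toReal := by
  obtain ⟨L, hL⟩ := isCompact_Icc.exists_bound_of_continuousOn (s := Set.Icc a b) hA.continuousOn
  have key : ∀ k : ℕ, _ := fun k => parts_step (K := K) (L := L) hB hA k a b hab hg hK hL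
  have t0 : Filter.Tendsto (fun k : ℕ => ((1 : ℝ) / 2) ^ k) Filter.atTop (nhds 0) :=
    tendsto_pow_atTop_nhds_zero_of_lt_one (by norm_num) (by norm_num)
  have t1 := (((t0.const_mul L).mul_const (b - a)).const_add K).mul_const
    (eVariationOn g (Set.Icc a b)).toReal
  simp only [mul_zero, zero_mul, add_zero] at t1
  exact ge_of_tendsto' t1 key

/-- Primitive of `T_k`. -/
noncomputable def prim (k : ℤ) (x : ℝ) : ℝ :=
  (Chebyshev.T ℝ (k + 1)).eval x / (2 * ((k : ℝ) + 1))
    - (Chebyshev.T ℝ (k - 1)).eval x / (2 * ((k : ℝ) - 1))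

lemma hasDerivAt_prim (k : ℤ) (hk : 2 ≤ k) (x : ℝ) :
    HasDerivAt (prim k) ((Chebyshev.T ℝ k).eval x) x := by
  have hk' : (2 : ℝ) ≤ k := by exact_mod_cast hk
  have h := (((Chebyshev.T ℝ (k + 1)).hasDerivAt x).div_const (2 * ((k : ℝ) + 1))).sub
    (((Chebyshev.T ℝ (k - 1)).hasDerivAt x).div_const (2 * ((k : ℝ) - 1)))
  refine h.congr_deriv ?_
  have e := congrArg (Polynomial.eval x) (Chebyshev.two_mul_T_eq_U_sub_U ℝ (k - 2))
  rw [sub_add_cancel] at e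
  rw [Chebyshev.T_derivative_eq_U, Chebyshev.T_derivative_eq_U, add_sub_cancel_right,
    show k - 1 - 1 = k - 2 by ring]
  simp only [eval_mul, eval_sub, eval_intCast, eval_ofNat] at e ⊢
  push_cast
  have h1 : (k : ℝ) + 1 ≠ 0 := by linarith
  have h2 : (k : ℝ) - 1 ≠ 0 := by intro h; linarith
  field_simp
  linarith

/-- Second primitive of `T_k`. -/
noncomputable def prim2 (k : ℤ) (x : ℝ) : ℝ :=
  prim (k + 1) x / (2 * ((k : ℝ) + 1)) - prim (k - 1) x / (2 * ((k : ℝ) - 1))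

lemma hasDerivAt_prim2 (k : ℤ) (hk : 3 ≤ k) (x : ℝ) :
    HasDerivAt (prim2 k) (prim k x) x :=
  ((hasDerivAt_prim (k + 1) (by linarith) x).div_const _).sub
    ((hasDerivAt_prim (k - 1) (by linarith) x).div_const _)

lemma prim_abs_le (k : ℤ) (hk : 2 ≤ k) {x : ℝ} (hx : x ∈ Set.Icc (-1 : ℝ) 1) :
    |prim k x| ≤ 1 / ((k : ℝ) - 1) := by
  have hk' : (2 : ℝ) ≤ k := by exact_mod_cast hk
  have a1 := Chebyshev.abs_eval_T_real_le_one (k + 1) (abs_le.2 hx)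
  have a2 := Chebyshev.abs_eval_T_real_le_one (k - 1) (abs_le.2 hx)
  unfold prim
  refine (abs_sub _ _).trans ?_
  rw [abs_div, abs_div, abs_of_pos (show 0 < 2 * ((k : ℝ) + 1) by linarith),
    abs_of_pos (show 0 < 2 * ((k : ℝ) - 1) by linarith)]
  have b1 : |(Chebyshev.T ℝ (k + 1)).eval x| / (2 * ((k : ℝ) + 1)) ≤ 1 / (2 * ((k : ℝ) - 1)) :=
    div_le_div₀ zero_le_one a1 (by linarith) (by linarith)
  have b2 : |(Chebyshev.T ℝ (k - 1)).eval x| / (2 * ((k : ℝ) - 1)) ≤ 1 / (2 * ((k : ℝ) - 1)) :=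
    div_le_div₀ zero_le_one a2 (by linarith) (by linarith)
  refine (add_le_add b1 b2).trans (le_of_eq ?_)
  have h2 : (k : ℝ) - 1 ≠ 0 := by intro h; linarith
  field_simp
  norm_num

lemma prim2_abs_le (k : ℤ) (hk : 3 ≤ k) {x : ℝ} (hx : x ∈ Set.Icc (-1 : ℝ) 1) :
    |prim2 k x| ≤ 1 / ((k : ℝ) - 2) ^ 2 := by
  have hk' : (3 : ℝ) ≤ k := by exact_mod_cast hk
  have a1 := prim_abs_le (k + 1) (by linarith) hx
  have a2 := prim_abs_le (k - 1) (by linarith) hx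
  push_cast at a1 a2
  have c1 : 1 / ((k : ℝ) + 1 - 1) ≤ 1 / (k - 2) :=
    one_div_le_one_div_of_le (by linarith) (by linarith)
  have c2 : 1 / ((k : ℝ) - 1 - 1) ≤ 1 / (k - 2) :=
    one_div_le_one_div_of_le (by linarith) (by linarith)
  unfold prim2
  refine (abs_sub _ _).trans ?_
  rw [abs_div, abs_div, abs_of_pos (show 0 < 2 * ((k : ℝ) + 1) by linarith),
    abs_of_pos (show 0 < 2 * ((k : ℝ) - 1) by linarith)]
  have hp : 0 ≤ 1 / ((k : ℝ) - 2) := by apply div_nonneg <;> linarith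
  have b1 : |prim (k + 1) x| / (2 * ((k : ℝ) + 1)) ≤ 1 / ((k : ℝ) - 2) / (2 * ((k : ℝ) - 2)) :=
    div_le_div₀ hp (a1.trans c1) (by linarith) (by linarith)
  have b2 : |prim (k - 1) x| / (2 * ((k : ℝ) - 1)) ≤ 1 / ((k : ℝ) - 2) / (2 * ((k : ℝ) - 2)) :=
    div_le_div₀ hp (a2.trans c2) (by linarith) (by linarith)
  refine (add_le_add b1 b2).trans (le_of_eq ?_)
  have h2 : (k : ℝ) - 2 ≠ 0 := by intro h; linarith
  field_simp
  norm_num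

lemma endpoint (x : ℝ) (hx : x = 1 ∨ x = -1) (k : ℤ) :
    (Chebyshev.T ℝ (k + 1)).eval x = x * (Chebyshev.T ℝ k).eval x ∧
    (Chebyshev.T ℝ (k - 1)).eval x = x * (Chebyshev.T ℝ k).eval x := by
  rcases hx with rfl | rfl
  · simp
  · simp [Int.negOnePow_succ, Int.negOnePow_sub]

lemma prim_endpoint (x : ℝ) (hx : x = 1 ∨ x = -1) (k : ℤ) (hk : 2 ≤ k) :
    prim k x = - (x * (Chebyshev.T ℝ k).eval x) / ((k : ℝ) ^ 2 - 1) := by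
  have hk' : (2 : ℝ) ≤ k := by exact_mod_cast hk
  unfold prim
  rw [(endpoint x hx k).1, (endpoint x hx k).2]
  have h1 : (k : ℝ) + 1 ≠ 0 := by linarith
  have h2 : (k : ℝ) - 1 ≠ 0 := by intro h; linarith
  rw [show (k : ℝ) ^ 2 - 1 = (k + 1) * (k - 1) by ring]
  field_simp
  ring

lemma prim_endpoint_le (x : ℝ) (hx : x = 1 ∨ x = -1) (k : ℤ) (hk : 3 ≤ k) :
    |prim k x| ≤ 1 / ((k : ℝ) - 1) ^ 2 := by
  have hk' : (3 : ℝ) ≤ k := by exact_mod_cast hk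
  have hx1 : |x| = 1 := by rcases hx with rfl | rfl <;> simp
  have a := Chebyshev.abs_eval_T_real_le_one k hx1.le
  rw [prim_endpoint x hx k (by linarith), abs_div, abs_neg, abs_mul, hx1, one_mul,
    abs_of_pos (show 0 < (k : ℝ) ^ 2 - 1 by nlinarith)]
  exact div_le_div₀ zero_le_one a (by nlinarith) (by nlinarith)

lemma prim2_endpoint_le (x : ℝ) (hx : x = 1 ∨ x = -1) (k : ℤ) (hk : 3 ≤ k) :
    |prim2 k x| ≤ 1 / ((k : ℝ) - 2) ^ 3 := by
  have hk' : (3 : ℝ) ≤ k := by exact_mod_cast hk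
  have hx1 : |x| = 1 := by rcases hx with rfl | rfl <;> simp
  have hxx : x * x = 1 := by rcases hx with rfl | rfl <;> simp
  have a := Chebyshev.abs_eval_T_real_le_one k hx1.le
  have e : prim2 k x
      = 3 * (Chebyshev.T ℝ k).eval x / (((k : ℝ) ^ 2 - 1) * ((k : ℝ) ^ 2 - 4)) := by
    unfold prim2
    rw [prim_endpoint x hx (k + 1) (by linarith), prim_endpoint x hx (k - 1) (by linarith),
      (endpoint x hx k).1, (endpoint x hx k).2, ← mul_assoc, hxx]
    push_cast
    have h0 : (k : ℝ) ≠ 0 := by linarith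
    have h1 : (k : ℝ) + 1 ≠ 0 := by linarith
    have h2 : (k : ℝ) - 1 ≠ 0 := by intro h; linarith
    have h3 : (k : ℝ) + 2 ≠ 0 := by linarith
    have h4 : (k : ℝ) - 2 ≠ 0 := by intro h; linarith
    rw [show ((k : ℝ) + 1) ^ 2 - 1 = k * (k + 2) by ring,
      show ((k : ℝ) - 1) ^ 2 - 1 = k * (k - 2) by ring,
      show (k : ℝ) ^ 2 - 1 = (k + 1) * (k - 1) by ring,
      show (k : ℝ) ^ 2 - 4 = (k + 2) * (k - 2) by ring]
    field_simp
    ring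
  obtain ⟨t, ht⟩ : ∃ t : ℝ, t = k - 3 := ⟨_, rfl⟩
  have ht0 : 0 ≤ t := by linarith
  have hkt : (k : ℝ) = t + 3 := by linarith
  have hpos : 0 < ((k : ℝ) ^ 2 - 1) * ((k : ℝ) ^ 2 - 4) := by
    apply mul_pos <;> nlinarith
  rw [e, abs_div, abs_mul, abs_of_pos hpos, abs_of_pos (show (0 : ℝ) < 3 by norm_num),
    div_le_div_iff₀ hpos (by apply pow_pos; linarith)]
  have h5 : 3 * ((k : ℝ) - 2) ^ 3 ≤ ((k : ℝ) ^ 2 - 1) * ((k : ℝ) ^ 2 - 4) := by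
    rw [hkt, ← sub_nonneg]
    ring_nf
    positivity
  have h6 : 0 ≤ ((k : ℝ) - 2) ^ 3 := by apply pow_nonneg; linarith
  nlinarith

end ChebBV

/-- If `w` is differentiable on an open set containing `[-1,1]` with
derivative `w'` of bounded variation on `[-1,1]`, with `M = sup |w|`, `M' = sup |w'|`
and `V'` the total variation of `w'` on `[-1,1]`, then for `n ≥ 3`,
`|∫ T_n w| ≤ 2M/(n-1)² + 2M'/(n-2)³ + V'/(n-2)²`. -/
theorem chebyshev_moment_bound_BV_derivative
    (w w' : ℝ → ℝ) (U : Set ℝ) (hU : IsOpen U) (hIcc : Set.Icc (-1 : ℝ) 1 ⊆ U)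
    (hderiv : ∀ x ∈ U, HasDerivAt w (w' x) x)
    (hBV : BoundedVariationOn w' (Set.Icc (-1 : ℝ) 1))
    (M M' V' : ℝ)
    (hM : M = sSup ((fun x => |w x|) '' Set.Icc (-1 : ℝ) 1))
    (hM' : M' = sSup ((fun x => |w' x|) '' Set.Icc (-1 : ℝ) 1))
    (hV' : V' = (eVariationOn w' (Set.Icc (-1 : ℝ) 1)).toReal)
    (n : ℕ) (hn : 3 ≤ n) :
    |∫ x in (-1 : ℝ)..1, (Polynomial.Chebyshev.T ℝ n).eval x * w x|
      ≤ 2 * M / ((n : ℝ) - 1) ^ 2 + 2 * M' / ((n : ℝ) - 2) ^ 3 + V' / ((n : ℝ) - 2) ^ 2 := by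
  have hm1 : (-1 : ℝ) ∈ Set.Icc (-1 : ℝ) 1 := by norm_num
  have h1 : (1 : ℝ) ∈ Set.Icc (-1 : ℝ) 1 := by norm_num
  have hk : (3 : ℤ) ≤ (n : ℤ) := by exact_mod_cast hn
  have hk' : (3 : ℝ) ≤ (n : ℝ) := by exact_mod_cast hn
  have hcont : ContinuousOn w (Set.Icc (-1 : ℝ) 1) := fun x hx =>
    (hderiv x (hIcc hx)).continuousAt.continuousWithinAt
  have hMle : ∀ x ∈ Set.Icc (-1 : ℝ) 1, |w x| ≤ M := fun x hx => by
    rw [hM]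
    exact le_csSup (isCompact_Icc.bddAbove_image hcont.abs) ⟨x, hx, rfl⟩
  have hM'le : ∀ x ∈ Set.Icc (-1 : ℝ) 1, |w' x| ≤ M' := fun x hx => by
    rw [hM']
    refine le_csSup ⟨V' + |w' 1|, ?_⟩ ⟨x, hx, rfl⟩
    rintro _ ⟨y, hy, rfl⟩
    have := hBV.dist_le hy h1
    rw [Real.dist_eq, ← hV'] at this
    have h2 := abs_add_le (w' y - w' 1) (w' 1)
    rw [sub_add_cancel] at h2
    simp only
    linarith
  have hle : (-1 : ℝ) ≤ 1 := by norm_num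
  have hAc : Continuous (ChebBV.prim n) := continuous_iff_continuousAt.2 fun x =>
    (ChebBV.hasDerivAt_prim n (by linarith) x).continuousAt
  have hip := intervalIntegral.integral_mul_deriv_eq_deriv_mul (a := (-1 : ℝ)) (b := 1)
    (u := ChebBV.prim n) (u' := fun x => (Chebyshev.T ℝ n).eval x) (v := w) (v' := w')
    (fun x _ => ChebBV.hasDerivAt_prim n (by linarith) x)
    (fun x hx => hderiv x (hIcc (by rwa [Set.uIcc_of_le hle] at hx)))
    ((Chebyshev.T ℝ n).continuous.intervalIntegrable _ _)
    (ChebBV.bv_intervalIntegrable hle hBV)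
  have hpb := ChebBV.parts_bound (ChebBV.hasDerivAt_prim2 n hk) hAc hle hBV
    (fun x hx => ChebBV.prim2_abs_le n hk hx)
  rw [← hV'] at hpb
  have hmul : ∀ {p q P Q : ℝ}, |p| ≤ P → |q| ≤ Q → |p * q| ≤ P * Q := fun {p q P Q} hp hq => by
    rw [abs_mul]
    exact mul_le_mul hp hq (abs_nonneg _) ((abs_nonneg _).trans hp)
  have c1 := abs_le.1 (hmul (ChebBV.prim_endpoint_le 1 (.inl rfl) n hk) (hMle 1 h1))
  have c2 := abs_le.1 (hmul (ChebBV.prim_endpoint_le (-1) (.inr rfl) n hk) (hMle (-1) hm1))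
  have c3 := abs_le.1 (hmul (ChebBV.prim2_endpoint_le 1 (.inl rfl) n hk) (hM'le 1 h1))
  have c4 := abs_le.1 (hmul (ChebBV.prim2_endpoint_le (-1) (.inr rfl) n hk) (hM'le (-1) hm1))
  have c5 := abs_le.1 hpb
  simp only [Int.cast_natCast] at c1 c2 c3 c4 c5
  have e : 2 * M / ((n : ℝ) - 1) ^ 2 + 2 * M' / ((n : ℝ) - 2) ^ 3 + V' / ((n : ℝ) - 2) ^ 2
      = 2 * (1 / ((n : ℝ) - 1) ^ 2 * M) + 2 * (1 / ((n : ℝ) - 2) ^ 3 * M')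
        + 1 / ((n : ℝ) - 2) ^ 2 * V' := by ring
  rw [e, abs_le]
  constructor <;> linarith [c1.1, c1.2, c2.1, c2.2, c3.1, c3.2, c4.1, c4.2, c5.1, c5.2]
end
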